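/- Let $\preceq$ be a convex preorder on $X \subset V \setminus \{0\}$, and for each $\preceq$-equivalence class $\mathcal C$ let $\preceq_{\mathcal C}$ be a convex preorder on $\mathcal C$. Define $x \preceq' y$ iff either $x \prec y$, or $x$ and $y$ belong to the same $\preceq$-equivalence class $\mathcal C$ and $x \preceq_{\mathcal C} y$. Then $\preceq'$ is a convex preorder on $X$. -/

import Mathlib

open scoped BigOperators

/-- `nnspan S` is the set of finite linear combinations of elements of `S`
with non-negative real coefficients (by convention `nnspan ∅ = {0}`). -/
def nnspan {V : Type*} [AddCommGroup V] [Module ℝ V] (S : Set V) : Set V :=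
  {x | ∃ (n : ℕ) (c : Fin n → ℝ) (v : Fin n → V),
    (∀ i, 0 ≤ c i) ∧ (∀ i, v i ∈ S) ∧ x = ∑ i, c i • v i}

/-- Minkowski sum of two subsets of `V`. -/
def setAdd {V : Type*} [AddCommGroup V] [Module ℝ V] (A B : Set V) : Set V :=
  {z | ∃ a ∈ A, ∃ b ∈ B, z = a + b}

/-- Elements of `X` strictly below `x` for the preorder `le`. -/
def strictBelow {V : Type*} [AddCommGroup V] [Module ℝ V]
    (le : V → V → Prop) (x : V) (X : Set V) : Set V :=
  {y ∈ X | le y x ∧ ¬ le x y}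

/-- Elements of `X` strictly above `x` for the preorder `le`. -/
def strictAbove {V : Type*} [AddCommGroup V] [Module ℝ V]
    (le : V → V → Prop) (x : V) (X : Set V) : Set V :=
  {y ∈ X | le x y ∧ ¬ le y x}

/-- The `le`-equivalence class of `x` inside `X`. -/
def eqClass {V : Type*} [AddCommGroup V] [Module ℝ V]
    (le : V → V → Prop) (x : V) (X : Set V) : Set V :=
  {y ∈ X | le x y ∧ le y x}

/-- A convex preorder on `X ⊆ V \ {0}`: a total preorder on `X` such that for every
equivalence class `𝒞`, the triple (strictly below `𝒞`, `𝒞`, strictly above `𝒞`) is a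
face, i.e. for any non-negative combinations `x₋` (of the strictly-below set) and `x₊`
(of the strictly-above set) with `x₋ - x₊ ∈ span ℝ 𝒞`, one has `x₋ = x₊ = 0`. -/
def IsConvexPreorder {V : Type*} [AddCommGroup V] [Module ℝ V]
    (X : Set V) (le : V → V → Prop) : Prop :=
  (∀ x ∈ X, le x x) ∧
  (∀ x ∈ X, ∀ y ∈ X, ∀ z ∈ X, le x y → le y z → le x z) ∧
  (∀ x ∈ X, ∀ y ∈ X, le x y ∨ le y x) ∧
  (∀ x ∈ X, ∀ xm ∈ nnspan (strictBelow le x X), ∀ xp ∈ nnspan (strictAbove le x X),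
    xm - xp ∈ Submodule.span ℝ (eqClass le x X) → xm = 0 ∧ xp = 0)

/-!
Fix a class `𝒞` of `⪯` and a class `𝒟 ⊆ 𝒞` of `⪯_𝒞`. The cone below `𝒟` for the refined preorder
is the sum of the cone below `𝒞` and the cone below `𝒟` inside `𝒞`, and similarly above.
If `(a₋ + b₋) - (a₊ + b₊) ∈ span 𝒟` is decomposed accordingly, then `b₋`, `b₊` and `span 𝒟` all lie
in `span 𝒞`, so `a₋ - a₊ ∈ span 𝒞` and the face condition for `𝒞` gives `a₋ = a₊ = 0`. What remains
is `b₋ - b₊ ∈ span 𝒟`, and the face condition for `𝒟` inside `𝒞` gives `b₋ = b₊ = 0`.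
-/

section LexRefinement

variable {α : Type*} {le le₂ : α → α → Prop}

/-- The refinement of the relation `le` by `le₂`: compare by `le` first, and by `le₂` inside the
equivalence classes of `le`. A single `le₂` encodes a family of relations on the classes, since it
is only consulted on equivalent elements. -/
def lexRefinement (le le₂ : α → α → Prop) (x y : α) : Prop :=
  (le x y ∧ ¬ le y x) ∨ (le x y ∧ le y x ∧ le₂ x y)

theorem lexRefinement_iff {x y : α} :
    lexRefinement le le₂ x y ↔ le x y ∧ (le y x → le₂ x y) := by
  unfold lexRefinement
  tauto

end LexRefinement

section

variable {V : Type*} [AddCommGroup V] [Module ℝ V]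

section Refinement

variable {X : Set V} {le le₂ : V → V → Prop}

theorem lexRefinement_trans
    (htrans : ∀ x ∈ X, ∀ y ∈ X, ∀ z ∈ X, le x y → le y z → le x z)
    (htrans₂ : ∀ x ∈ X, ∀ y ∈ eqClass le x X, ∀ z ∈ eqClass le x X, ∀ w ∈ eqClass le x X,
      le₂ y z → le₂ z w → le₂ y w) :
    ∀ x ∈ X, ∀ y ∈ X, ∀ z ∈ X,
      lexRefinement le le₂ x y → lexRefinement le le₂ y z → lexRefinement le le₂ x z := by
  simp only [lexRefinement_iff]
  rintro x hx y hy z hz ⟨hxy, hxy₂⟩ ⟨hyz, hyz₂⟩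
  have hxz : le x z := htrans x hx y hy z hz hxy hyz
  refine ⟨hxz, fun hzx => ?_⟩
  have hyx : le y x := htrans y hy z hz x hx hyz hzx
  have hzy : le z y := htrans z hz x hx y hy hzx hxy
  have hxx : le x x := htrans x hx y hy x hx hxy hyx
  exact htrans₂ x hx x ⟨hx, hxx, hxx⟩ y ⟨hy, hxy, hyx⟩ z ⟨hz, hxz, hzx⟩ (hxy₂ hyx) (hyz₂ hzy)

theorem lexRefinement_total
    (htotal : ∀ x ∈ X, ∀ y ∈ X, le x y ∨ le y x)
    (htotal₂ : ∀ x ∈ X, ∀ y ∈ eqClass le x X, ∀ z ∈ eqClass le x X, le₂ y z ∨ le₂ z y) :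
    ∀ x ∈ X, ∀ y ∈ X, lexRefinement le le₂ x y ∨ lexRefinement le le₂ y x := by
  intro x hx y hy
  have hxx : le x x := or_self_iff.mp (htotal x hx x hx)
  have hxy : le x y ∨ le y x := htotal x hx y hy
  have hequiv (h : le x y ∧ le y x) : le₂ x y ∨ le₂ y x :=
    htotal₂ x hx x ⟨hx, hxx, hxx⟩ y ⟨hy, h⟩
  simp only [lexRefinement_iff]
  tauto

theorem strictBelow_lexRefinement (x : V) :
    strictBelow (lexRefinement le le₂) x X =
      strictBelow le x X ∪ strictBelow le₂ x (eqClass le x X) := by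
  ext y
  simp only [strictBelow, eqClass, lexRefinement_iff, Set.mem_union, Set.mem_ofPred_eq]
  tauto

theorem strictAbove_lexRefinement (x : V) :
    strictAbove (lexRefinement le le₂) x X =
      strictAbove le x X ∪ strictAbove le₂ x (eqClass le x X) := by
  ext y
  simp only [strictAbove, eqClass, lexRefinement_iff, Set.mem_union, Set.mem_ofPred_eq]
  tauto

theorem eqClass_lexRefinement (x : V) :
    eqClass (lexRefinement le le₂) x X = eqClass le₂ x (eqClass le x X) := by
  ext y
  simp only [eqClass, lexRefinement_iff, Set.mem_ofPred_eq]
  tauto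

end Refinement

section Face

open scoped NNReal

theorem nnspan_eq_span_nnreal (S : Set V) : nnspan S = Submodule.span ℝ≥0 S := by
  ext x
  rw [SetLike.mem_coe, Submodule.mem_span_set']
  constructor
  · rintro ⟨n, c, v, hc, hv, rfl⟩
    exact ⟨n, fun i => ⟨c i, hc i⟩, fun i => ⟨v i, hv i⟩, rfl⟩
  · rintro ⟨n, c, v, rfl⟩
    exact ⟨n, fun i => c i, fun i => v i, fun i => (c i).2, fun i => (v i).2, rfl⟩

theorem mem_nnspan_union {S T : Set V} {x : V} :
    x ∈ nnspan (S ∪ T) ↔ ∃ a ∈ nnspan S, ∃ b ∈ nnspan T, a + b = x := by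
  simp only [nnspan_eq_span_nnreal, SetLike.mem_coe, Submodule.span_union, Submodule.mem_sup]

theorem nnspan_subset_span (S : Set V) : nnspan S ⊆ Submodule.span ℝ S := by
  rw [nnspan_eq_span_nnreal]
  exact Submodule.span_subset_span ℝ≥0 ℝ S

/-- The triple `(N, C, P)` is a face: modulo the span of `C`, the cones spanned by `N` and `P`
meet only in `0`, and no nonzero element of either cone lies in the span of `C`. -/
def IsFace (N C P : Set V) : Prop :=
  ∀ n ∈ nnspan N, ∀ p ∈ nnspan P, n - p ∈ Submodule.span ℝ C → n = 0 ∧ p = 0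

theorem IsFace.refine {N C P N' C' P' : Set V} (h : IsFace N C P) (h' : IsFace N' C' P')
    (hN' : N' ⊆ C) (hC' : C' ⊆ C) (hP' : P' ⊆ C) :
    IsFace (N ∪ N') C' (P ∪ P') := by
  intro n hn p hp hnp
  obtain ⟨a, ha, b, hb, rfl⟩ := mem_nnspan_union.mp hn
  obtain ⟨c, hc, d, hd, rfl⟩ := mem_nnspan_union.mp hp
  have hb_span : b ∈ Submodule.span ℝ C := Submodule.span_mono hN' (nnspan_subset_span N' hb)
  have hd_span : d ∈ Submodule.span ℝ C := Submodule.span_mono hP' (nnspan_subset_span P' hd)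
  have hac : a - c ∈ Submodule.span ℝ C := by
    have hdecomp : a - c = (a + b - (c + d)) - (b - d) := by abel
    rw [hdecomp]
    exact sub_mem (Submodule.span_mono hC' hnp) (sub_mem hb_span hd_span)
  obtain ⟨rfl, rfl⟩ := h a ha c hc hac
  simp only [zero_add] at hnp ⊢
  exact h' b hb d hd hnp

end Face

end

/-- refinement lemma. Let `⪯` be a convex preorder on `X ⊆ V \ {0}`
and, for each `⪯`-equivalence class `𝒞`, let `⪯𝒞` (here realized by a single relation
`le2` restricting to a convex preorder on each class) be a convex preorder on `𝒞`.
Define `x ⪯' y` iff either `x ≺ y`, or `x, y` lie in the same `⪯`-equivalence class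
and `x ⪯𝒞 y`. Then `⪯'` is a convex preorder on `X`. -/
theorem convexPreorder_refinement {V : Type*} [AddCommGroup V] [Module ℝ V]
    (X : Set V) (hX0 : (0 : V) ∉ X) (le le2 : V → V → Prop)
    (hconv : IsConvexPreorder X le)
    (hclass : ∀ x ∈ X, IsConvexPreorder (eqClass le x X) le2) :
    IsConvexPreorder X
      (fun x y => (le x y ∧ ¬ le y x) ∨ (le x y ∧ le y x ∧ le2 x y)) := by
  obtain ⟨hrefl, htrans, htotal, hface⟩ := hconv
  have hself (x : V) (hx : x ∈ X) : x ∈ eqClass le x X := ⟨hx, hrefl x hx, hrefl x hx⟩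
  change IsConvexPreorder X (lexRefinement le le2)
  refine ⟨fun x hx => ?refl, lexRefinement_trans htrans fun x hx => (hclass x hx).2.1,
    lexRefinement_total htotal fun x hx => (hclass x hx).2.2.1, fun x hx => ?face⟩
  case refl => exact lexRefinement_iff.mpr ⟨hrefl x hx, fun _ => (hclass x hx).1 x (hself x hx)⟩
  case face =>
    have hface_le : IsFace (strictBelow le x X) (eqClass le x X) (strictAbove le x X) :=
      hface x hx
    have hface_le2 : IsFace (strictBelow le2 x (eqClass le x X)) (eqClass le2 x (eqClass le x X))
        (strictAbove le2 x (eqClass le x X)) :=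
      (hclass x hx).2.2.2 x (hself x hx)
    rw [strictBelow_lexRefinement, strictAbove_lexRefinement, eqClass_lexRefinement]
    exact hface_le.refine hface_le2 (Set.sep_subset _ _) (Set.sep_subset _ _) (Set.sep_subset _ _)
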